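/- arXiv:1710.06517 — 8 statements merged into one kernel-verified Lean document; each statement's English description precedes it below -/
import Mathlib

section
/- For all natural numbers 0 ≤ k ≤ n, there exists a polynomial P ∈ ℤ[s,t] with nonnegative integer coefficients such that P · {k}!_{s,t} · {n−k}!_{s,t} = {n}!_{s,t} in ℤ[s,t]; in particular {k}!_{s,t}·{n−k}!_{s,t} divides {n}!_{s,t}, so the Fibonomial coefficient {n choose k}_{s,t} is a polynomial with nonnegative integer coefficients. -/
open MvPolynomial

/-- The generalized Fibonacci polynomials `{m}_{s,t} ∈ ℤ[s,t]`, with `s = X 0`, `t = X 1`. -/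
noncomputable def gfib : ℕ → MvPolynomial (Fin 2) ℤ
  | 0 => 0
  | 1 => 1
  | (m + 2) => X 0 * gfib (m + 1) + X 1 * gfib m

/-- The Fibonacci factorial `{m}!_{s,t} = {m}_{s,t} {m-1}_{s,t} ⋯ {1}_{s,t}`. -/
noncomputable def gfibFact : ℕ → MvPolynomial (Fin 2) ℤ
  | 0 => 1
  | (m + 1) => gfib (m + 1) * gfibFact m

/-!
Splitting the index as `n + 1 = (n - k) + k + 1`, the addition formula
`{a + b + 1} = {a + 1} {b + 1} + t {a} {b}` gives the Pascal-type recurrence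
`{n + 1 choose k + 1} = {n - k + 1} {n choose k} + t {k} {n choose k + 1}`.
It involves neither subtraction nor division of polynomials, so the Fibonomial coefficients
inherit nonnegative coefficients from `s` and `t`.
-/

section NonnegCoeffs

variable (σ R : Type*) [CommSemiring R] [PartialOrder R] [IsOrderedRing R]

/-- The subsemiring of `MvPolynomial σ R` formed by the polynomials all of whose coefficients are
nonnegative. -/
def nonnegCoeffs : Subsemiring (MvPolynomial σ R) where
  carrier := {P | ∀ d, 0 ≤ P.coeff d}
  zero_mem' _ := by rw [coeff_zero]
  one_mem' d := by
    classical
    rw [coeff_one]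
    split_ifs
    exacts [zero_le_one, le_rfl]
  add_mem' hP hQ d := by
    rw [coeff_add]
    exact add_nonneg (hP d) (hQ d)
  mul_mem' hP hQ d := by
    classical
    rw [coeff_mul]
    exact Finset.sum_nonneg fun _ _ => mul_nonneg (hP _) (hQ _)

variable {σ}

theorem X_mem_nonnegCoeffs (i : σ) : X i ∈ nonnegCoeffs σ R := by
  classical
  intro d
  rw [coeff_X]
  split_ifs
  exacts [zero_le_one, le_rfl]

end NonnegCoeffs

theorem gfib_mem_nonnegCoeffs (m : ℕ) : gfib m ∈ nonnegCoeffs (Fin 2) ℤ := by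
  induction m using gfib.induct with
  | case1 => exact zero_mem _
  | case2 => exact one_mem _
  | case3 m ih₁ ih₀ =>
    exact add_mem (mul_mem (X_mem_nonnegCoeffs ℤ 0) ih₁) (mul_mem (X_mem_nonnegCoeffs ℤ 1) ih₀)

theorem gfib_add_add_one (a b : ℕ) :
    gfib (a + b + 1) = gfib (a + 1) * gfib (b + 1) + X 1 * gfib a * gfib b := by
  induction b generalizing a with
  | zero => simp [gfib]
  | succ b ih =>
    rw [← add_assoc, add_right_comm a b 1, ih (a + 1)]
    simp only [gfib]
    ring

/-- The Fibonomial coefficient `{n choose k}_{s,t}`, defined for all `n` and `k` by its Pascal-type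
recurrence instead of as a quotient of Fibonacci factorials. It vanishes for `n < k`, so the
truncated difference `n - k` only matters when `k ≤ n`. -/
noncomputable def fibonomial : ℕ → ℕ → MvPolynomial (Fin 2) ℤ
  | _, 0 => 1
  | 0, _ + 1 => 0
  | n + 1, k + 1 => gfib (n - k + 1) * fibonomial n k + X 1 * gfib k * fibonomial n (k + 1)

@[simp]
theorem fibonomial_zero_right (n : ℕ) : fibonomial n 0 = 1 := by
  rw [fibonomial]

theorem fibonomial_succ_succ (n k : ℕ) :
    fibonomial (n + 1) (k + 1) =
      gfib (n - k + 1) * fibonomial n k + X 1 * gfib k * fibonomial n (k + 1) := by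
  rw [fibonomial]

theorem fibonomial_eq_zero_of_lt {n k : ℕ} (h : n < k) : fibonomial n k = 0 := by
  induction n, k using fibonomial.induct with
  | case1 => exact absurd h (Nat.not_lt_zero _)
  | case2 => rw [fibonomial]
  | case3 n k ih ih' =>
    rw [fibonomial_succ_succ, ih (by lia), ih' (by lia), mul_zero, mul_zero, add_zero]

@[simp]
theorem fibonomial_self (n : ℕ) : fibonomial n n = 1 := by
  induction n with
  | zero => exact fibonomial_zero_right 0
  | succ n ih =>
    rw [fibonomial_succ_succ, ih, fibonomial_eq_zero_of_lt n.lt_succ_self, Nat.sub_self]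
    simp [gfib]

theorem fibonomial_mem_nonnegCoeffs (n k : ℕ) : fibonomial n k ∈ nonnegCoeffs (Fin 2) ℤ := by
  induction n, k using fibonomial.induct with
  | case1 => simpa only [fibonomial_zero_right] using one_mem _
  | case2 => simpa only [fibonomial] using zero_mem _
  | case3 n k ih ih' =>
    rw [fibonomial_succ_succ]
    exact add_mem (mul_mem (gfib_mem_nonnegCoeffs _) ih)
      (mul_mem (mul_mem (X_mem_nonnegCoeffs ℤ 1) (gfib_mem_nonnegCoeffs k)) ih')

theorem fibonomial_add_mul_gfibFact_mul_gfibFact (a b : ℕ) :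
    fibonomial (a + b) a * gfibFact a * gfibFact b = gfibFact (a + b) := by
  induction a generalizing b with
  | zero => simp [gfibFact]
  | succ a iha =>
    induction b with
    | zero => simp [gfibFact]
    | succ b ihb =>
      have pascal : fibonomial (a + 1 + (b + 1)) (a + 1) =
          gfib (b + 2) * fibonomial (a + (b + 1)) a +
            X 1 * gfib a * fibonomial (a + 1 + b) (a + 1) := by
        rw [← add_assoc, fibonomial_succ_succ, show a + 1 + b = a + (b + 1) by lia,
          Nat.add_sub_cancel_left]
      have add_formula : gfib (a + 1 + b + 1) =
          gfib (b + 2) * gfib (a + 1) + X 1 * gfib (b + 1) * gfib a := by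
        rw [show a + 1 + b + 1 = b + 1 + a + 1 by lia, gfib_add_add_one]
      calc fibonomial (a + 1 + (b + 1)) (a + 1) * gfibFact (a + 1) * gfibFact (b + 1)
        _ = gfib (b + 2) * gfib (a + 1) *
                (fibonomial (a + (b + 1)) a * gfibFact a * gfibFact (b + 1)) +
              X 1 * gfib (b + 1) * gfib a *
                (fibonomial (a + 1 + b) (a + 1) * gfibFact (a + 1) * gfibFact b) := by
          simp only [pascal, gfibFact]
          ring
        _ = (gfib (b + 2) * gfib (a + 1) + X 1 * gfib (b + 1) * gfib a) *
              gfibFact (a + 1 + b) := by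
          rw [iha, ihb, show a + (b + 1) = a + 1 + b by lia, add_mul]
        _ = gfibFact (a + 1 + (b + 1)) := by
          rw [← add_formula, ← add_assoc, gfibFact]

theorem fibonomial_mul_gfibFact_mul_gfibFact {n k : ℕ} (hk : k ≤ n) :
    fibonomial n k * gfibFact k * gfibFact (n - k) = gfibFact n := by
  simpa only [Nat.add_sub_cancel' hk] using fibonomial_add_mul_gfibFact_mul_gfibFact k (n - k)

/-- For `0 ≤ k ≤ n` there is a polynomial `P ∈ ℤ[s,t]` with nonnegative coefficients
such that `P · {k}!_{s,t} · {n-k}!_{s,t} = {n}!_{s,t}`; i.e. the Fibonomial coefficient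
is a polynomial with nonnegative integer coefficients. -/
theorem fibonomial_is_polynomial_with_nonneg_coeffs (n k : ℕ) (hk : k ≤ n) :
    ∃ P : MvPolynomial (Fin 2) ℤ,
      (∀ d : Fin 2 →₀ ℕ, 0 ≤ P.coeff d) ∧
      P * gfibFact k * gfibFact (n - k) = gfibFact n :=
  ⟨fibonomial n k, fibonomial_mem_nonnegCoeffs n k, fibonomial_mul_gfibFact_mul_gfibFact hk⟩
end

section
/- Let 0 ≤ k ≤ n and let P ∈ ℤ[s,t] be the Fibonomial polynomial, i.e. the unique polynomial with P·{k}!_{s,t}·{n−k}!_{s,t} = {n}!_{s,t}. Then in the field of rational functions ℚ(a,b), P(a+b, −ab) = b^{k(n−k)} · Q(a/b), where Q ∈ ℤ[q] is the Gaussian binomial polynomial, i.e. the unique polynomial with Q·[k]!_q·[n−k]!_q = [n]!_q. -/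
open MvPolynomial

/-- The q-analogue `[m]_q = 1 + q + ⋯ + q^{m-1} ∈ ℤ[q]`. -/
noncomputable def qInt (m : ℕ) : Polynomial ℤ := ∑ i ∈ Finset.range m, Polynomial.X ^ i

/-- The q-factorial `[m]!_q = [m]_q [m-1]_q ⋯ [1]_q`. -/
noncomputable def qFact : ℕ → Polynomial ℤ
  | 0 => 1
  | (m + 1) => qInt (m + 1) * qFact m

/-- The field of rational functions `ℚ(a,b)`. -/
abbrev RatFunField := FractionRing (MvPolynomial (Fin 2) ℚ)

/-- The rational function `a ∈ ℚ(a,b)`. -/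
noncomputable def ra : RatFunField :=
  algebraMap (MvPolynomial (Fin 2) ℚ) RatFunField (X 0)

/-- The rational function `b ∈ ℚ(a,b)`. -/
noncomputable def rb : RatFunField :=
  algebraMap (MvPolynomial (Fin 2) ℚ) RatFunField (X 1)

/-!
Put `q = a / b`. At `s = a + b`, `t = -ab` the polynomial `{m}` becomes `b ^ (m - 1) * [m]_q`, hence
`{m}!` becomes `b ^ (m choose 2) * [m]!_q`, and the exponents of `b` in the quotient combine to
`k (n - k)`. Division by the factorials is legitimate in the domain `ℤ[q][b]`, where `[m]!_q` is
monic in `q`; any pair `(q, b)` in a commutative ring is a specialization of this generic one.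
-/

theorem add_choose_two (k j : ℕ) : (k + j).choose 2 = k * j + k.choose 2 + j.choose 2 := by
  simp [Nat.add_choose_eq, Finset.Nat.antidiagonal_succ, add_comm]

theorem qInt_succ (m : ℕ) : qInt (m + 1) = qInt m + Polynomial.X ^ m :=
  Finset.sum_range_succ _ m

theorem monic_qFact (m : ℕ) : (qFact m).Monic := by
  induction m with
  | zero => exact Polynomial.monic_one
  | succ m ih => exact (Polynomial.monic_geom_sum_X m.succ_ne_zero).mul ih

theorem map_aeval_pair {R A B : Type*} [CommSemiring R] [CommSemiring A] [CommSemiring B]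
    [Algebra R A] [Algebra R B] (φ : A →ₐ[R] B) (x y : A) (p : MvPolynomial (Fin 2) R) :
    φ (aeval ![x, y] p) = aeval ![φ x, φ y] p := by
  rw [comp_aeval_apply]
  congr 2 with i
  fin_cases i <;> rfl

open scoped Polynomial.Bivariate Polynomial in
theorem aeval_C_X {R : Type*} [CommSemiring R] (p : Polynomial R) :
    Polynomial.aeval (Polynomial.C Polynomial.X : R[X][Y]) p = Polynomial.C p := by
  rw [← Polynomial.algebraMap_eq, Polynomial.aeval_algebraMap_apply, Polynomial.aeval_X_left_apply]

section Substitution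

open scoped Polynomial Polynomial.Bivariate

-- `Algebra ℤ R` is a variable because the instance that `ℚ(a,b)` gets as a localization is not
-- definitionally the one derived from its ring structure.
variable {R : Type*} [CommRing R] [Algebra ℤ R] {a b q : R}

theorem aeval_gfib_succ (hq : q * b = a) (m : ℕ) :
    aeval ![a + b, -(a * b)] (gfib (m + 1)) = b ^ m * Polynomial.aeval q (qInt (m + 1)) := by
  subst hq
  induction m using Nat.twoStepInduction with
  | zero => simp [gfib, qInt]
  | one => simp [gfib, qInt, Finset.sum_range_succ, mul_add, add_comm, mul_comm]
  | more m ih₀ ih₁ =>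
    rw [gfib, map_add, map_mul, map_mul, ih₀, ih₁]
    simp only [qInt_succ, map_add, map_pow, aeval_X, Polynomial.aeval_X, Matrix.cons_val_zero,
      Matrix.cons_val_one]
    ring

theorem aeval_gfibFact (hq : q * b = a) (m : ℕ) :
    aeval ![a + b, -(a * b)] (gfibFact m) = b ^ m.choose 2 * Polynomial.aeval q (qFact m) := by
  induction m with
  | zero => simp [gfibFact, qFact]
  | succ m ih =>
    rw [gfibFact, qFact, map_mul, map_mul, ih, aeval_gfib_succ hq, Nat.choose_succ_succ' m 1,
      Nat.choose_one_right, pow_add]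
    ring

theorem aeval_fibonomial_of_aeval_qFact_ne_zero [NoZeroDivisors R] (hq : q * b = a) (hb : b ≠ 0)
    {n k : ℕ} (hk : k ≤ n) {P : MvPolynomial (Fin 2) ℤ}
    (hP : P * gfibFact k * gfibFact (n - k) = gfibFact n) {Q : ℤ[X]}
    (hQ : Q * qFact k * qFact (n - k) = qFact n)
    (hqk : Polynomial.aeval q (qFact k) ≠ 0) (hqnk : Polynomial.aeval q (qFact (n - k)) ≠ 0) :
    aeval ![a + b, -(a * b)] P = b ^ (k * (n - k)) * Polynomial.aeval q Q := by
  obtain ⟨j, rfl⟩ := Nat.exists_eq_add_of_le hk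
  rw [Nat.add_sub_cancel_left] at hP hQ hqnk ⊢
  have hP' := congrArg (aeval ![a + b, -(a * b)]) hP
  have hQ' := congrArg (Polynomial.aeval q) hQ
  simp only [map_mul, aeval_gfibFact hq] at hP' hQ'
  rw [← hQ', add_choose_two, pow_add, pow_add] at hP'
  have factorials_ne_zero : b ^ k.choose 2 * Polynomial.aeval q (qFact k) *
      (b ^ j.choose 2 * Polynomial.aeval q (qFact j)) ≠ 0 :=
    mul_ne_zero (mul_ne_zero (pow_ne_zero _ hb) hqk) (mul_ne_zero (pow_ne_zero _ hb) hqnk)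
  apply mul_right_cancel₀ factorials_ne_zero
  linear_combination hP'

theorem fibonomial_eq_qbinomial_of_substitution_general (hq : q * b = a) {n k : ℕ} (hk : k ≤ n)
    {P : MvPolynomial (Fin 2) ℤ} (hP : P * gfibFact k * gfibFact (n - k) = gfibFact n)
    {Q : ℤ[X]} (hQ : Q * qFact k * qFact (n - k) = qFact n) :
    aeval ![a + b, -(a * b)] P = b ^ (k * (n - k)) * Polynomial.aeval q Q := by
  let x : ℤ[X][Y] := Polynomial.C Polynomial.X
  have aeval_x_qFact_ne_zero (m : ℕ) : Polynomial.aeval x (qFact m) ≠ 0 := by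
    rw [aeval_C_X]
    exact Polynomial.C_ne_zero.mpr (monic_qFact m).ne_zero
  have generic : aeval ![x * Y + Y, -(x * Y * Y)] P =
      Y ^ (k * (n - k)) * Polynomial.aeval x Q :=
    aeval_fibonomial_of_aeval_qFact_ne_zero rfl Polynomial.X_ne_zero hk hP hQ
      (aeval_x_qFact_ne_zero k) (aeval_x_qFact_ne_zero (n - k))
  have specialized := congrArg (Polynomial.aevalAeval q b) generic
  simpa only [map_aeval_pair, map_neg, map_add, map_mul, map_pow, x, aeval_C_X,
    Polynomial.aevalAeval_C, Polynomial.aeval_X, Polynomial.aevalAeval_Y, hq] using specialized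

end Substitution

theorem rb_ne_zero : rb ≠ 0 :=
  (FaithfulSMul.algebraMap_eq_zero_iff _ _).not.mpr (X_ne_zero 1)

/-- If `P` is the Fibonomial polynomial for `(n, k)` and `Q` is the Gaussian binomial
polynomial, then in `ℚ(a,b)` we have `P(a + b, -ab) = b^{k(n-k)} Q(a/b)`. -/
theorem fibonomial_eq_qbinomial_of_substitution (n k : ℕ) (hk : k ≤ n)
    (P : MvPolynomial (Fin 2) ℤ)
    (hP : P * gfibFact k * gfibFact (n - k) = gfibFact n)
    (Q : Polynomial ℤ)
    (hQ : Q * qFact k * qFact (n - k) = qFact n) :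
    aeval ![ra + rb, -(ra * rb)] P = rb ^ (k * (n - k)) * Polynomial.aeval (ra / rb) Q :=
  fibonomial_eq_qbinomial_of_substitution_general (div_mul_cancel₀ ra rb_ne_zero) hk hP hQ
end

section
/- Let k be a field and let φ : k[s,t] → k[a,b] be the k-algebra homomorphism determined by φ(s) = a+b and φ(t) = −ab. If p, q ∈ k[s,t] with q ≠ 0 and φ(q) divides φ(p) in k[a,b], then q divides p in k[s,t]. (Equivalently: a rational function f ∈ k(s,t) such that f(a+b, −ab) is a polynomial in a and b must itself be a polynomial in s and t.) -/
open MvPolynomial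

/-!
Over `A = R[s, t]` the quadratic algebra `A[ω]` with `ω² = t + s ω` contains the two roots `ω` and
`star ω` of `x² = s x + t`, with sum `s` and product `-t`. Evaluating `a` and `b` at these roots
turns `φ` into the inclusion `A → A[ω]`, so a divisibility `φ(q) ∣ φ(p)` becomes `q ∣ p` in `A[ω]`.
It descends to `A` because `A[ω]` is free over `A` with basis `1, ω`.
-/

section QuadraticRoots

open scoped QuadraticAlgebra

variable {R A : Type*} [CommRing R] [CommRing A]

theorem omega_add_star_omega (s t : A) :
    (ω + star ω : QuadraticAlgebra A t s) = algebraMap A _ s := by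
  ext <;> simp

theorem omega_mul_star_omega (s t : A) :
    (ω * star ω : QuadraticAlgebra A t s) = -algebraMap A _ t := by
  ext <;> simp

theorem aeval_omega_star_omega_subst [Algebra R A] (x : Fin 2 → A) (p : MvPolynomial (Fin 2) R) :
    aeval ![(ω : QuadraticAlgebra A (x 1) (x 0)), star ω]
        (aeval ![(X 0 + X 1 : MvPolynomial (Fin 2) R), -(X 0 * X 1)] p) =
      algebraMap A _ (aeval x p) := by
  rw [← aeval_algebraMap_apply, comp_aeval_apply]
  congr 2
  ext i : 1
  fin_cases i <;> simp [omega_add_star_omega, omega_mul_star_omega]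

theorem aeval_dvd_aeval_of_dvd_subst [Algebra R A] (x : Fin 2 → A) {p q : MvPolynomial (Fin 2) R}
    (h : aeval ![(X 0 + X 1 : MvPolynomial (Fin 2) R), -(X 0 * X 1)] q ∣
      aeval ![(X 0 + X 1 : MvPolynomial (Fin 2) R), -(X 0 * X 1)] p) :
    aeval x q ∣ aeval x p := by
  have h_roots := map_dvd (aeval ![(ω : QuadraticAlgebra A (x 1) (x 0)), star ω]) h
  rw [aeval_omega_star_omega_subst, aeval_omega_star_omega_subst] at h_roots
  exact QuadraticAlgebra.algebraMap_dvd_iff_dvd.mp h_roots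

end QuadraticRoots

theorem dvd_of_dvd_subst_general {R : Type*} [CommRing R] (p q : MvPolynomial (Fin 2) R)
    (h : aeval ![(X 0 + X 1 : MvPolynomial (Fin 2) R), -(X 0 * X 1)] q ∣
      aeval ![(X 0 + X 1 : MvPolynomial (Fin 2) R), -(X 0 * X 1)] p) :
    q ∣ p := by
  simpa only [aeval_X_left_apply] using
    aeval_dvd_aeval_of_dvd_subst (X : Fin 2 → MvPolynomial (Fin 2) R) h

/-- Let `φ : k[s,t] → k[a,b]` be the `k`-algebra map with `φ(s) = a + b`, `φ(t) = -ab`.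
If `q ≠ 0` and `φ(q) ∣ φ(p)` in `k[a,b]`, then `q ∣ p` in `k[s,t]`.  (Equivalently, a
rational function `f ∈ k(s,t)` such that `f(a+b, -ab)` is a polynomial is itself a
polynomial.) -/
theorem dvd_of_dvd_subst {K : Type*} [Field K] (p q : MvPolynomial (Fin 2) K)
    (hq : q ≠ 0)
    (h : (aeval ![(X 0 + X 1 : MvPolynomial (Fin 2) K), -(X 0 * X 1)] q) ∣
          (aeval ![(X 0 + X 1 : MvPolynomial (Fin 2) K), -(X 0 * X 1)] p)) :
    q ∣ p :=
  dvd_of_dvd_subst_general p q h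
end

section
/- Let n ≥ 1 and k ≥ 0. The complete homogeneous symmetric polynomial h_k in n variables, evaluated at the geometric progression a^{n−1}, a^{n−2}b, …, ab^{n−2}, b^{n−1}, equals P(a+b, −ab) in ℤ[a,b], where P ∈ ℤ[s,t] is the Fibonomial polynomial of type (n+k−1, k), i.e. the unique polynomial with P·{k}!_{s,t}·{n−1}!_{s,t} = {n+k−1}!_{s,t}. -/
open MvPolynomial

/-! Write `{m}` also for its value at `s = a + b`, `t = -ab`, the parameters for which `a` and `b`
are the roots of `z² = sz + t`. These values satisfy `{n + k} = aⁿ{k} + bᵏ{n}`. Let `h(n, k)` be the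
value of `h_k` at the `n` terms `aⁿ⁻¹, …, bⁿ⁻¹`. Of the `n + 1` terms `aⁿ, …, bⁿ`, all but the first
are `b` times the terms of the next shorter progression, hence the Pascal recursion
`h(n + 1, k + 1) = aⁿ h(n + 1, k) + bᵏ⁺¹ h(n, k + 1)`. Induction gives
`h(n + 1, k) · {k}! · {n}! = {n + k}!` in every commutative ring. In `ℤ[a,b]` the factorials can be
cancelled, as they specialize to `1` at `(a, b) = (0, 1)`. -/

section CompleteHomogeneous

variable {σ R A : Type*} [CommSemiring R] [CommSemiring A] [Algebra R A]

theorem aeval_hsymm [Fintype σ] [DecidableEq σ] (f : σ → A) (k : ℕ) :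
    aeval f (hsymm σ R k) = ∑ s : Sym σ k, (s.1.map f).prod := by
  simp [hsymm, map_multiset_prod]

theorem aeval_mul_const_hsymm [Fintype σ] [DecidableEq σ] (f : σ → A) (c : A) (k : ℕ) :
    aeval (fun i => f i * c) (hsymm σ R k) = c ^ k * aeval f (hsymm σ R k) := by
  simp only [aeval_hsymm, Multiset.prod_map_mul, Finset.mul_sum]
  refine Finset.sum_congr rfl fun s _ => ?_
  rw [Multiset.map_const', Multiset.prod_replicate, s.2, mul_comm]

theorem hsymm_option_succ [Fintype σ] [DecidableEq σ] (k : ℕ) :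
    hsymm (Option σ) R (k + 1) =
      X none * hsymm (Option σ) R k + rename some (hsymm σ R (k + 1)) := by
  simp only [hsymm, map_sum, Finset.mul_sum]
  rw [← Equiv.sum_comp (symOptionSuccEquiv (α := σ) (n := k)).symm, Fintype.sum_sum_type]
  congr 1 <;> refine Finset.sum_congr rfl fun s _ => ?_
  · exact (congrArg Multiset.prod (Multiset.map_cons X none s.1)).trans (Multiset.prod_cons _ _)
  · simp [symOptionSuccEquiv, SymOptionSuccEquiv.decode, map_multiset_prod, Multiset.map_map]

theorem hsymm_fin_succ (n k : ℕ) :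
    hsymm (Fin (n + 1)) R (k + 1) =
      X 0 * hsymm (Fin (n + 1)) R k + rename Fin.succ (hsymm (Fin n) R (k + 1)) := by
  have h := congrArg (rename (finSuccEquiv n).symm) (hsymm_option_succ (σ := Fin n) (R := R) k)
  simpa [rename_hsymm, rename_rename, Function.comp_def] using h

end CompleteHomogeneous

/-- The polynomial `h_k` evaluated at the `n` terms `a^{n-1}, a^{n-2}b, …, b^{n-1}` of a geometric
progression. -/
noncomputable def geomHsymm {R : Type*} [CommRing R] (a b : R) (n k : ℕ) : R :=
  aeval (fun i : Fin n => a ^ (n - 1 - (i : ℕ)) * b ^ (i : ℕ)) (hsymm (Fin n) ℤ k)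

/-- The substitution `s = a + b`, `t = -ab` in `ℤ[s,t]`, which makes `a` and `b` the roots of
`z² = sz + t`. -/
noncomputable def rootSubst {R : Type*} [CommRing R] (a b : R) : MvPolynomial (Fin 2) ℤ →ₐ[ℤ] R :=
  aeval ![a + b, -(a * b)]

section

variable {R S : Type*} [CommRing R] [CommRing S] (a b : R)

theorem map_geomHsymm (f : R →+* S) (n k : ℕ) :
    f (geomHsymm a b n k) = geomHsymm (f a) (f b) n k := by
  simpa [geomHsymm] using comp_aeval_apply
    (fun i : Fin n => a ^ (n - 1 - (i : ℕ)) * b ^ (i : ℕ)) f.toIntAlgHom (hsymm (Fin n) ℤ k)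

theorem geomHsymm_zero_right (n : ℕ) : geomHsymm a b n 0 = 1 := by
  simp [geomHsymm]

theorem geomHsymm_succ_succ (n k : ℕ) :
    geomHsymm a b (n + 1) (k + 1) =
      a ^ n * geomHsymm a b (n + 1) k + b ^ (k + 1) * geomHsymm a b n (k + 1) := by
  have tail_eq (i : Fin n) : a ^ (n - ((i : ℕ) + 1)) * b ^ ((i : ℕ) + 1) =
      a ^ (n - 1 - (i : ℕ)) * b ^ (i : ℕ) * b := by
    rw [add_comm (i : ℕ), Nat.sub_add_eq, add_comm 1, pow_succ, mul_assoc]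
  simp [geomHsymm, hsymm_fin_succ, aeval_rename, Function.comp_def, tail_eq, aeval_mul_const_hsymm]

theorem geomHsymm_one_left (k : ℕ) : geomHsymm a b 1 k = 1 := by
  simp [geomHsymm, aeval_hsymm]

theorem map_rootSubst (f : R →+* S) (p : MvPolynomial (Fin 2) ℤ) :
    f (rootSubst a b p) = rootSubst (f a) (f b) p := by
  suffices f.toIntAlgHom.comp (rootSubst a b) = rootSubst (f a) (f b) from DFunLike.congr_fun this p
  ext i
  fin_cases i <;> simp [rootSubst]

theorem rootSubst_gfib_add_two (m : ℕ) :
    rootSubst a b (gfib (m + 2)) =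
      (a + b) * rootSubst a b (gfib (m + 1)) - a * b * rootSubst a b (gfib m) := by
  simp [gfib, rootSubst, sub_eq_add_neg]

theorem rootSubst_gfib_succ (m : ℕ) :
    rootSubst a b (gfib (m + 1)) = a * rootSubst a b (gfib m) + b ^ m := by
  induction m with
  | zero => simp [gfib]
  | succ m ih =>
    rw [rootSubst_gfib_add_two]
    linear_combination b * ih

theorem rootSubst_gfib_add (n k : ℕ) :
    rootSubst a b (gfib (n + k)) =
      a ^ n * rootSubst a b (gfib k) + b ^ k * rootSubst a b (gfib n) := by
  induction n using Nat.twoStepInduction with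
  | zero => simp [gfib]
  | one => simp [add_comm 1 k, rootSubst_gfib_succ, gfib]
  | more n ih ih_succ =>
    rw [add_right_comm] at ih_succ ⊢
    rw [rootSubst_gfib_add_two, rootSubst_gfib_add_two]
    linear_combination (a + b) * ih_succ - a * b * ih

theorem rootSubst_gfibFact_succ (m : ℕ) :
    rootSubst a b (gfibFact (m + 1)) =
      rootSubst a b (gfib (m + 1)) * rootSubst a b (gfibFact m) := by
  rw [gfibFact, map_mul]

theorem geomHsymm_mul_gfibFact_mul_gfibFact (n k : ℕ) :
    geomHsymm a b (n + 1) k * rootSubst a b (gfibFact k) * rootSubst a b (gfibFact n) =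
      rootSubst a b (gfibFact (n + k)) := by
  induction n generalizing k with
  | zero => simp [geomHsymm_one_left, gfibFact]
  | succ n ih_n =>
    induction k with
    | zero => simp [geomHsymm_zero_right, gfibFact]
    | succ k ih_k =>
      have fact_add : rootSubst a b (gfibFact (n + 1 + (k + 1))) =
          (a ^ (n + 1) * rootSubst a b (gfib (k + 1)) +
            b ^ (k + 1) * rootSubst a b (gfib (n + 1))) *
              rootSubst a b (gfibFact (n + 1 + k)) := by
        rw [← rootSubst_gfib_add]
        exact rootSubst_gfibFact_succ a b (n + 1 + k)
      have ih_pred := ih_n (k + 1)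
      rw [← add_assoc, add_right_comm] at ih_pred
      rw [geomHsymm_succ_succ, fact_add]
      simp only [rootSubst_gfibFact_succ] at ih_k ih_pred ⊢
      linear_combination a ^ (n + 1) * rootSubst a b (gfib (k + 1)) * ih_k +
        b ^ (k + 1) * rootSubst a b (gfib (n + 1)) * ih_pred

end

theorem rootSubst_zero_one_gfibFact (m : ℕ) : rootSubst (0 : ℤ) 1 (gfibFact m) = 1 := by
  induction m with
  | zero => simp [gfibFact]
  | succ m ih => simp [rootSubst_gfibFact_succ, rootSubst_gfib_succ, ih]

theorem rootSubst_X_X_gfibFact_ne_zero (m : ℕ) :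
    rootSubst (X 0 : MvPolynomial (Fin 2) ℤ) (X 1) (gfibFact m) ≠ 0 := by
  intro h
  have eval_zero_one := congrArg (eval ![(0 : ℤ), 1]) h
  simp [map_rootSubst, rootSubst_zero_one_gfibFact] at eval_zero_one

theorem hsymm_geometric_eq_fibonomial_general {R : Type*} [CommRing R] (a b : R) (n k : ℕ)
    (hn : 1 ≤ n) (P : MvPolynomial (Fin 2) ℤ)
    (hP : P * gfibFact k * gfibFact (n - 1) = gfibFact (n + k - 1)) :
    aeval (fun i : Fin n => a ^ (n - 1 - (i : ℕ)) * b ^ (i : ℕ)) (hsymm (Fin n) ℤ k) =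
      aeval ![a + b, -(a * b)] P := by
  suffices universal : geomHsymm (X 0 : MvPolynomial (Fin 2) ℤ) (X 1) n k =
      rootSubst (X 0) (X 1) P by
    have specialized := congrArg (eval₂Hom (Int.castRingHom R) ![a, b]) universal
    rw [map_geomHsymm, map_rootSubst] at specialized
    simpa [geomHsymm, rootSubst] using specialized
  obtain ⟨n, rfl⟩ := Nat.exists_eq_add_of_le' hn
  rw [Nat.add_right_comm, Nat.add_sub_cancel, Nat.add_sub_cancel] at hP
  refine mul_right_cancel₀ (rootSubst_X_X_gfibFact_ne_zero k) <|
    mul_right_cancel₀ (rootSubst_X_X_gfibFact_ne_zero n) ?_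
  rw [geomHsymm_mul_gfibFact_mul_gfibFact, ← hP, map_mul, map_mul]

/-- The complete homogeneous symmetric polynomial `h_k` in `n` variables, evaluated at the
geometric progression `a^{n-1}, a^{n-2}b, …, b^{n-1}`, equals `P(a+b, -ab)` where `P` is
the Fibonomial polynomial of type `(n+k-1, k)`. -/
theorem hsymm_geometric_eq_fibonomial (n k : ℕ) (hn : 1 ≤ n)
    (P : MvPolynomial (Fin 2) ℤ)
    (hP : P * gfibFact k * gfibFact (n - 1) = gfibFact (n + k - 1)) :
    aeval (fun i : Fin n => (X 0 : MvPolynomial (Fin 2) ℤ) ^ (n - 1 - (i : ℕ)) * X 1 ^ (i : ℕ))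
        (hsymm (Fin n) ℤ k)
      = aeval ![(X 0 + X 1 : MvPolynomial (Fin 2) ℤ), -(X 0 * X 1)] P :=
  hsymm_geometric_eq_fibonomial_general (X 0) (X 1) n k hn P hP
end

section
/- (Dihedral sieving for k-subsets.) Let n be odd, 0 ≤ k ≤ n, let P ∈ ℤ[s,t] be the unique polynomial with P·{k}!_{s,t}·{n−k}!_{s,t} = {n}!_{s,t}, and let ζ = exp(2πi/n) ∈ ℂ. Then for every integer ℓ, P(ζ^ℓ + ζ^{−ℓ}, −1) equals the number of k-element subsets A of ℤ/nℤ with {x+ℓ : x ∈ A} = A; and P(0, 1) equals the number of k-element subsets A of ℤ/nℤ with {−x : x ∈ A} = A. -/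
open MvPolynomial

/-- The primitive `n`-th root of unity `ζ = exp(2πi/n)`. -/
noncomputable def primRoot (n : ℕ) : ℂ := Complex.exp (2 * Real.pi * Complex.I / n)

/-!
Substituting `s = a + b`, `t = -ab` turns `{m}` into `(a ^ m - b ^ m) / (a - b)`, and the
homogeneous `q`-binomial theorem becomes
`∏_{i < n} (1 + a ^ i b ^ (n - 1 - i) x) = ∑_k (ab) ^ (k choose 2) P_{n,k}(a + b, -ab) x ^ k`.
The two evaluations are `(a, b) = (q, q⁻¹)` and `(a, b) = (1, -1)`. In the first case the roots of
unity collapse the product to `(1 + x ^ d) ^ (n / d)`, where `d` is the order of `q`; in the second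
the product is `(1 + x)(1 - x ^ 2) ^ ((n - 1) / 2)`, and the signs `(-1) ^ (k choose 2)` turn it
into `(1 + x)(1 + x ^ 2) ^ ((n - 1) / 2)`. On the other hand a set is fixed by a permutation iff it
is a union of orbits, so the fixed subsets have generating function `∏_ω (1 + x ^ |ω|)` over the
orbits `ω`, which is the same polynomial.
-/

section FibonacciAtRoots

variable {R S : Type*} [CommRing R] [CommRing S]

/-- Evaluation of a polynomial in `s, t` at `s = a + b`, `t = -ab`, so that `a` and `b` are the
roots of the characteristic polynomial `z ^ 2 - s z - t` of the recursion of `gfib`. -/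
noncomputable def rootEval (a b : R) : MvPolynomial (Fin 2) ℤ →ₐ[ℤ] R :=
  aeval ![a + b, -(a * b)]

theorem map_rootEval (f : R →+* S) (a b : R) (P : MvPolynomial (Fin 2) ℤ) :
    f (rootEval a b P) = rootEval (f a) (f b) P := by
  have hvalues : (fun i => f.toIntAlgHom (![a + b, -(a * b)] i))
      = ![f a + f b, -(f a * f b)] := by
    ext i; fin_cases i <;> simp
  have := comp_aeval_apply ![a + b, -(a * b)] f.toIntAlgHom P
  rwa [hvalues] at this

theorem rootEval_gfib_succ (a b : R) (m : ℕ) :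
    rootEval a b (gfib (m + 1)) = a * rootEval a b (gfib m) + b ^ m := by
  induction m with
  | zero => simp [gfib]
  | succ m ih =>
    have hrec : rootEval a b (gfib (m + 2))
        = (a + b) * rootEval a b (gfib (m + 1)) - a * b * rootEval a b (gfib m) := by
      simp [gfib, rootEval, sub_eq_add_neg]
    rw [hrec]
    linear_combination b * ih

theorem rootEval_gfib_add (a b : R) (m n : ℕ) :
    rootEval a b (gfib (m + n))
      = a ^ m * rootEval a b (gfib n) + b ^ n * rootEval a b (gfib m) := by
  induction m with
  | zero => simp [gfib]
  | succ m ih =>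
    rw [Nat.add_right_comm, rootEval_gfib_succ, rootEval_gfib_succ, ih]
    ring

theorem rootEval_gfibFact_succ (a b : R) (m : ℕ) :
    rootEval a b (gfibFact (m + 1))
      = rootEval a b (gfib (m + 1)) * rootEval a b (gfibFact m) :=
  map_mul _ _ _

theorem rootEval_one_zero_gfibFact (m : ℕ) : rootEval (1 : R) 0 (gfibFact m) = 1 := by
  have gfib_eq_one (m : ℕ) : rootEval (1 : R) 0 (gfib (m + 1)) = 1 := by
    induction m with
    | zero => simp [gfib]
    | succ m ih => simp [rootEval_gfib_succ _ _ (m + 1), ih]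
  induction m with
  | zero => simp [gfibFact]
  | succ m ih => rw [rootEval_gfibFact_succ, gfib_eq_one, ih, one_mul]

theorem rootEval_X_gfibFact_ne_zero (m : ℕ) :
    rootEval (X 0 : MvPolynomial (Fin 2) ℤ) (X 1) (gfibFact m) ≠ 0 := by
  intro hzero
  have hmap := map_rootEval (eval₂Hom (Int.castRingHom ℤ) ![1, 0]) (X 0) (X 1) (gfibFact m)
  simp [hzero, rootEval_one_zero_gfibFact] at hmap

end FibonacciAtRoots

section BinomialProduct

variable {R S : Type*} [CommRing R] [CommRing S]

/-- The product `∏_{i < n} (1 + a ^ i b ^ (n - 1 - i) x)` of the homogeneous `q`-binomial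
theorem. The truncated subtraction is exact, since `i < n`. -/
noncomputable def binomialProd (a b : R) (n : ℕ) : Polynomial R :=
  ∏ i ∈ Finset.range n, (1 + Polynomial.C (a ^ i * b ^ (n - 1 - i)) * Polynomial.X)

theorem map_binomialProd (f : R →+* S) (a b : R) (n : ℕ) :
    (binomialProd a b n).map f = binomialProd (f a) (f b) n := by
  simp [binomialProd, Polynomial.map_prod]

theorem binomialProd_succ (a b : R) (n : ℕ) :
    binomialProd a b (n + 1)
      = (binomialProd a b n).comp (Polynomial.C b * Polynomial.X)
        * (1 + Polynomial.C (a ^ n) * Polynomial.X) := by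
  rw [binomialProd, binomialProd, Finset.prod_range_succ, Polynomial.prod_comp]
  congr 1
  · refine Finset.prod_congr rfl fun i hi => ?_
    have hexp : n + 1 - 1 - i = n - 1 - i + 1 := by have := Finset.mem_range.1 hi; omega
    simp only [hexp, pow_succ, map_mul, map_pow, Polynomial.add_comp, Polynomial.one_comp,
      Polynomial.mul_comp, Polynomial.pow_comp, Polynomial.C_comp, Polynomial.X_comp]
    ring
  · simp

theorem coeff_zero_binomialProd (a b : R) (n : ℕ) : (binomialProd a b n).coeff 0 = 1 := by
  simp [binomialProd, Polynomial.coeff_zero_prod]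

theorem coeff_succ_binomialProd_succ (a b : R) (n k : ℕ) :
    (binomialProd a b (n + 1)).coeff (k + 1)
      = b ^ (k + 1) * (binomialProd a b n).coeff (k + 1)
        + a ^ n * b ^ k * (binomialProd a b n).coeff k := by
  rw [binomialProd_succ, mul_add, mul_one, Polynomial.coeff_add, ← mul_assoc,
    Polynomial.coeff_mul_X, Polynomial.coeff_mul_C, Polynomial.comp_C_mul_X_coeff,
    Polynomial.comp_C_mul_X_coeff]
  ring

theorem coeff_binomialProd_of_lt (a b : R) {n k : ℕ} (h : n < k) :
    (binomialProd a b n).coeff k = 0 := by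
  induction n generalizing k with
  | zero => simp [binomialProd, Polynomial.coeff_one, h.ne']
  | succ n ih =>
    obtain ⟨k, rfl⟩ := Nat.exists_eq_succ_of_ne_zero (Nat.ne_zero_of_lt h)
    rw [Nat.succ_eq_add_one, coeff_succ_binomialProd_succ, ih (by omega), ih (by omega)]
    ring

theorem coeff_binomialProd_mul_gfibFact (a b : R) (k j : ℕ) :
    (binomialProd a b (k + j)).coeff k * rootEval a b (gfibFact k) * rootEval a b (gfibFact j)
      = (a * b) ^ k.choose 2 * rootEval a b (gfibFact (k + j)) := by
  induction hn : k + j generalizing k j with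
  | zero =>
    obtain ⟨rfl, rfl⟩ := Nat.add_eq_zero_iff.1 hn
    simp [binomialProd, gfibFact]
  | succ n ih =>
    obtain _ | k := k
    · obtain rfl : j = n + 1 := by omega
      simp [coeff_zero_binomialProd, gfibFact]
    have hchoose : (k + 1).choose 2 = k.choose 2 + k := by
      rw [Nat.choose_succ_succ' k 1, Nat.choose_one_right, add_comm]
    have hterm := ih k j (by omega)
    rw [coeff_succ_binomialProd_succ, hchoose]
    obtain _ | j := j
    · obtain rfl : k = n := by omega
      rw [coeff_binomialProd_of_lt a b k.lt_succ_self]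
      simp only [rootEval_gfibFact_succ] at hterm ⊢
      linear_combination a ^ k * b ^ k * rootEval a b (gfib (k + 1)) * hterm
    · have hterm_succ := ih (k + 1) j (by omega)
      have hadd := rootEval_gfib_add a b (j + 1) (k + 1)
      obtain rfl : n = k + 1 + j := by omega
      rw [show j + 1 + (k + 1) = k + 1 + j + 1 by ring] at hadd
      rw [hchoose] at hterm_succ
      simp only [rootEval_gfibFact_succ] at hterm hterm_succ ⊢
      rw [hadd]
      linear_combination b ^ (k + 1) * rootEval a b (gfib (j + 1)) * hterm_succ
        + a ^ (k + 1 + j) * b ^ k * rootEval a b (gfib (k + 1)) * hterm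

-- The Fibonacci factorials may vanish at `(a, b)`, so they are cancelled at indeterminate roots.
theorem coeff_binomialProd_eq_rootEval {k n : ℕ} (hk : k ≤ n) {P : MvPolynomial (Fin 2) ℤ}
    (hP : P * gfibFact k * gfibFact (n - k) = gfibFact n) (a b : R) :
    (binomialProd a b n).coeff k = (a * b) ^ k.choose 2 * rootEval a b P := by
  have universal : (binomialProd (X 0 : MvPolynomial (Fin 2) ℤ) (X 1) n).coeff k
      = (X 0 * X 1) ^ k.choose 2 * rootEval (X 0) (X 1) P := by
    have hcoeff := coeff_binomialProd_mul_gfibFact (X 0 : MvPolynomial (Fin 2) ℤ) (X 1) k (n - k)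
    rw [Nat.add_sub_cancel' hk, ← hP, map_mul, map_mul] at hcoeff
    refine mul_right_cancel₀ (mul_ne_zero (rootEval_X_gfibFact_ne_zero k)
      (rootEval_X_gfibFact_ne_zero (n - k))) ?_
    linear_combination hcoeff
  have hmap := congrArg (eval₂Hom (Int.castRingHom R) ![a, b]) universal
  rw [map_mul, map_pow, map_mul, map_rootEval, ← Polynomial.coeff_map, map_binomialProd] at hmap
  simpa using hmap

end BinomialProduct

section Specializations

theorem prod_one_add_pow_odd_mul_X {K : Type*} [CommRing K] [IsDomain K] {d : ℕ} (hd : Odd d)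
    {q : K} (hq : IsPrimitiveRoot q d) :
    ∏ i ∈ Finset.range d, (1 + Polynomial.C (q ^ (2 * i + 1)) * Polynomial.X)
      = 1 + Polynomial.X ^ d := by
  classical
  have hC : IsPrimitiveRoot (Polynomial.C q) d := hq.map_of_injective Polynomial.C_injective
  have hsq : IsPrimitiveRoot (Polynomial.C q ^ 2) d :=
    hC.pow_of_coprime 2 (Nat.coprime_two_left.2 hd)
  have hroots : (Polynomial.nthRootsFinset d (1 : Polynomial K)).val
      = (Multiset.range d).map fun i => (Polynomial.C q ^ 2) ^ i * Polynomial.C q := by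
    rw [Polynomial.nthRootsFinset_def, Multiset.toFinset_val, hC.nthRoots_one_nodup.dedup,
      hsq.nthRoots_eq hC.pow_eq_one]
  have hprod := hC.pow_add_pow_eq_prod_add_mul 1 Polynomial.X hd
  rw [one_pow, Finset.prod_eq_multiset_prod, hroots, Multiset.map_map] at hprod
  rw [hprod, Finset.prod_eq_multiset_prod, Finset.range_val]
  simp only [Function.comp_apply, map_mul, map_pow, pow_succ _ (2 * _), pow_mul]

theorem binomialProd_inv {K : Type*} [Field K] {d : ℕ} (hd : Odd d) {q : K}
    (hq : IsPrimitiveRoot q d) (m : ℕ) :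
    binomialProd q q⁻¹ (d * m) = (1 + Polynomial.X ^ d) ^ m := by
  have hexp : ∀ i ∈ Finset.range (d * m), q ^ i * q⁻¹ ^ (d * m - 1 - i) = q ^ (2 * i + 1) := by
    intro i hi
    have hi := Finset.mem_range.1 hi
    rw [inv_pow, ← div_eq_mul_inv, div_eq_iff (pow_ne_zero _ (hq.ne_zero hd.pos.ne')), ← pow_add,
      show 2 * i + 1 + (d * m - 1 - i) = i + d * m by omega, pow_add, pow_mul, hq.pow_eq_one,
      one_pow, mul_one]
  have hperiodic (j i : ℕ) : q ^ (2 * (d * j + i) + 1) = q ^ (2 * i + 1) := by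
    rw [show 2 * (d * j + i) + 1 = d * (2 * j) + (2 * i + 1) by ring, pow_add, pow_mul,
      hq.pow_eq_one, one_pow, one_mul]
  rw [binomialProd, Finset.prod_congr rfl fun i hi => by rw [hexp i hi]]
  clear hexp
  induction m with
  | zero => simp
  | succ m ih =>
    simp only [Nat.mul_succ, Finset.prod_range_add, ih, hperiodic,
      prod_one_add_pow_odd_mul_X hd hq, pow_succ _ m]

variable {R : Type*} [CommRing R]

theorem binomialProd_one_neg_one (m : ℕ) :
    binomialProd (1 : R) (-1) (2 * m + 1)
      = (1 + Polynomial.X) * (1 - Polynomial.X ^ 2) ^ m := by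
  induction m with
  | zero => simp [binomialProd]
  | succ m ih =>
    rw [Nat.mul_succ, Nat.add_right_comm, binomialProd_succ, binomialProd_succ, ih]
    simp only [Polynomial.mul_comp, Polynomial.pow_comp, Polynomial.add_comp, Polynomial.sub_comp,
      Polynomial.one_comp, Polynomial.X_comp, Polynomial.neg_comp, one_pow, map_one, map_neg]
    ring

theorem coeff_one_add_X_mul_expand_two (p : Polynomial R) (k : ℕ) :
    ((1 + Polynomial.X) * Polynomial.expand R 2 p).coeff k = p.coeff (k / 2) := by
  obtain _ | k := k
  · simp [add_mul, Polynomial.coeff_expand]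
  rw [add_mul, one_mul, Polynomial.coeff_add, Polynomial.coeff_X_mul,
    Polynomial.coeff_expand two_pos, Polynomial.coeff_expand two_pos]
  obtain ⟨j, rfl | rfl⟩ := k.even_or_odd'
  · simp [show ¬ 2 ∣ 2 * j + 1 by omega, show (2 * j + 1) / 2 = j by omega]
  · simp [show ¬ 2 ∣ 2 * j + 1 by omega, show 2 ∣ 2 * j + 1 + 1 by omega]

theorem neg_one_pow_choose_two (k : ℕ) : (-1 : R) ^ k.choose 2 = (-1) ^ (k / 2) := by
  induction k using Nat.twoStepInduction with
  | zero => simp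
  | one => simp
  | more k ih _ =>
    have hchoose : (k + 2).choose 2 = k.choose 2 + 2 * k + 1 := by
      rw [Nat.choose_succ_succ' (k + 1) 1, Nat.choose_succ_succ' k 1]
      simp only [Nat.choose_one_right]
      ring
    rw [hchoose, Nat.add_div_right k two_pos, pow_succ, pow_succ, pow_add, ih, pow_mul]
    simp

theorem coeff_one_add_X_mul_one_sub_X_sq_pow (m k : ℕ) :
    ((1 + Polynomial.X) * (1 - Polynomial.X ^ 2) ^ m : Polynomial R).coeff k
      = (-1) ^ k.choose 2
        * ((1 + Polynomial.X) * (1 + Polynomial.X ^ 2) ^ m : Polynomial R).coeff k := by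
  have hplus : (1 + Polynomial.X ^ 2) ^ m = Polynomial.expand R 2 ((1 + Polynomial.X) ^ m) := by
    simp
  have hminus : (1 - Polynomial.X ^ 2) ^ m = Polynomial.expand R 2
      (((1 + Polynomial.X) ^ m).comp (Polynomial.C (-1) * Polynomial.X)) := by
    simp [sub_eq_add_neg]
  rw [hplus, hminus, coeff_one_add_X_mul_expand_two, coeff_one_add_X_mul_expand_two,
    neg_one_pow_choose_two, Polynomial.comp_C_mul_X_coeff, mul_comm]

end Specializations

section FixedSubsets

open scoped Pointwise

variable {α : Type*}

/-- A set is saturated for `f : α → β` if it is a union of fibres of `f`. -/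
def IsSaturated {β : Type*} (f : α → β) (A : Finset α) : Prop :=
  ∀ x y, f x = f y → x ∈ A → y ∈ A

/-- For surjective `f`, saturated sets correspond to sets of fibres, through direct and inverse
image. -/
noncomputable def saturatedEquiv [Fintype α] {β : Type*} [DecidableEq β] {f : α → β}
    (hf : Function.Surjective f) : {A : Finset α // IsSaturated f A} ≃ Finset β where
  toFun A := A.1.image f
  invFun T := ⟨Finset.univ.filter (f · ∈ T), fun x y hxy hx => by simpa [hxy] using hx⟩
  left_inv := by
    rintro ⟨A, hA⟩
    ext y
    simp only [Finset.mem_filter_univ, Finset.mem_image]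
    exact ⟨fun ⟨x, hx, hxy⟩ => hA x y hxy hx, fun hy => ⟨y, hy, rfl⟩⟩
  right_inv T := by
    ext b
    simp only [Finset.mem_image, Finset.mem_filter_univ]
    refine ⟨?_, fun hb => ?_⟩
    · rintro ⟨x, hx, rfl⟩
      exact hx
    · obtain ⟨x, rfl⟩ := hf b
      exact ⟨x, hb, rfl⟩

theorem card_saturatedEquiv_symm [Fintype α] {β : Type*} [DecidableEq β] {f : α → β}
    (hf : Function.Surjective f) (T : Finset β) :
    ((saturatedEquiv hf).symm T).1.card = ∑ b ∈ T, Nat.card (f ⁻¹' {b}) := by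
  classical
  have hfiber : ∀ b ∈ T, (Finset.univ.filter (f · ∈ T)).filter (f · = b)
      = Finset.univ.filter (f · = b) := by
    intro b hb
    rw [Finset.filter_filter]
    exact Finset.filter_congr fun x _ => and_iff_right_of_imp fun hx => hx ▸ hb
  change (Finset.univ.filter (f · ∈ T)).card = _
  rw [Finset.card_eq_sum_card_fiberwise (f := f) (t := T) fun x => by simp]
  refine Finset.sum_congr rfl fun b hb => ?_
  rw [hfiber b hb, ← Fintype.card_subtype, ← Nat.card_eq_fintype_card]
  rfl

theorem card_saturated_eq_coeff (R : Type*) [CommSemiring R] [Finite α] {β : Type*} [Fintype β]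
    {f : α → β} (hf : Function.Surjective f) (k : ℕ) :
    (Nat.card {A : Finset α // A.card = k ∧ IsSaturated f A} : R)
      = (∏ b, (1 + Polynomial.X ^ Nat.card (f ⁻¹' {b})) : Polynomial R).coeff k := by
  classical
  have := Fintype.ofFinite α
  have e : {A : Finset α // A.card = k ∧ IsSaturated f A}
      ≃ {T : Finset β // ∑ b ∈ T, Nat.card (f ⁻¹' {b}) = k} :=
    (Equiv.subtypeEquivRight fun _ => and_comm).trans <|
      (Equiv.subtypeSubtypeEquivSubtypeInter _ _).symm.trans <|
        (saturatedEquiv hf).subtypeEquiv fun A => by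
          rw [← card_saturatedEquiv_symm hf, Equiv.symm_apply_apply]
  rw [Nat.card_congr e, Finset.prod_one_add, Polynomial.finsetSum_coeff]
  simp only [Finset.prod_pow_eq_pow_sum, Polynomial.coeff_X_pow, Finset.powerset_univ]
  rw [Finset.sum_boole, Nat.card_eq_fintype_card, Fintype.card_subtype]
  simp only [eq_comm]

/-- The orbits of a permutation, fixed points included. -/
abbrev PermOrbits (σ : Equiv.Perm α) : Type _ :=
  MulAction.orbitRel.Quotient (Subgroup.zpowers σ) α

theorem card_orbit_eq_minimalPeriod [Finite α] (σ : Equiv.Perm α) (x : α) :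
    Nat.card (MulAction.orbitRel.Quotient.orbit (⟦x⟧ : PermOrbits σ))
      = Function.minimalPeriod σ x := by
  have := Fintype.ofFinite (MulAction.orbit (Subgroup.zpowers σ) x)
  change Nat.card (MulAction.orbit (Subgroup.zpowers σ) x) = _
  rw [Nat.card_eq_fintype_card, ← MulAction.minimalPeriod_eq_card]
  rfl

theorem card_eq_sum_card_orbit [Finite α] (σ : Equiv.Perm α) [Fintype (PermOrbits σ)] :
    Nat.card α = ∑ ω : PermOrbits σ, Nat.card ω.orbit := by
  rw [Nat.card_congr (MulAction.selfEquivSigmaOrbits' (Subgroup.zpowers σ) α), Nat.card_sigma]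

theorem image_eq_iff_isSaturated [DecidableEq α] (σ : Equiv.Perm α) (A : Finset α) :
    A.image σ = A ↔ IsSaturated (Quotient.mk _ : α → PermOrbits σ) A := by
  constructor
  · intro hA x y hxy hx
    have hzpowers : Subgroup.zpowers σ ≤ MulAction.stabilizer (Equiv.Perm α) A :=
      Subgroup.zpowers_le.2 hA
    obtain ⟨g, rfl⟩ := MulAction.orbitRel_apply.1 (Quotient.exact hxy.symm)
    have hgA : (g : Equiv.Perm α) • A = A := hzpowers g.2
    rw [← hgA]
    exact Finset.smul_mem_smul_finset hx
  · intro hA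
    refine Finset.eq_of_subset_of_card_le (Finset.image_subset_iff.2 fun x hx => ?_)
      (Finset.card_image_of_injective A σ.injective).ge
    refine hA x (σ x) (Quotient.sound (MulAction.orbitRel_apply.2 ?_)) hx
    exact MulAction.mem_orbit_symm.1 ⟨⟨σ, Subgroup.mem_zpowers σ⟩, rfl⟩

theorem card_fixed_eq_coeff (R : Type*) [CommSemiring R] [Finite α] [DecidableEq α]
    (σ : Equiv.Perm α) [Fintype (PermOrbits σ)] (k : ℕ) :
    (Nat.card {A : Finset α // A.card = k ∧ A.image σ = A} : R)
      = (∏ ω : PermOrbits σ, (1 + Polynomial.X ^ Nat.card ω.orbit) : Polynomial R).coeff k := by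
  have hfiber (ω : PermOrbits σ) : (Quotient.mk _ : α → PermOrbits σ) ⁻¹' {ω} = ω.orbit := by
    ext x
    exact MulAction.orbitRel.Quotient.mem_orbit.symm
  simp only [image_eq_iff_isSaturated, card_saturated_eq_coeff R Quotient.mk_surjective, hfiber]

theorem exists_card_fixed_of_minimalPeriod_eq (R : Type*) [CommSemiring R] [Finite α]
    [DecidableEq α] {σ : Equiv.Perm α} {d : ℕ} (hσ : ∀ x, Function.minimalPeriod σ x = d) :
    ∃ m, Nat.card α = d * m ∧ ∀ k,
      (Nat.card {A : Finset α // A.card = k ∧ A.image σ = A} : R)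
        = ((1 + Polynomial.X ^ d) ^ m : Polynomial R).coeff k := by
  have := Fintype.ofFinite (PermOrbits σ)
  have hcard (ω : PermOrbits σ) : Nat.card ω.orbit = d := by
    obtain ⟨x, rfl⟩ := Quotient.exists_rep ω
    rw [card_orbit_eq_minimalPeriod, hσ]
  refine ⟨Fintype.card (PermOrbits σ), ?_, fun k => ?_⟩
  · simp [card_eq_sum_card_orbit σ, hcard, mul_comm]
  · simp [card_fixed_eq_coeff, hcard]

theorem exists_card_fixed_of_involutive (R : Type*) [CommSemiring R] [Finite α]
    [DecidableEq α] {σ : Equiv.Perm α} (hσ : Function.Involutive σ)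
    (hfix : ∃! x, Function.IsFixedPt σ x) :
    ∃ m, Nat.card α = 2 * m + 1 ∧ ∀ k,
      (Nat.card {A : Finset α // A.card = k ∧ A.image σ = A} : R)
        = ((1 + Polynomial.X) * (1 + Polynomial.X ^ 2) ^ m : Polynomial R).coeff k := by
  classical
  have := Fintype.ofFinite (PermOrbits σ)
  obtain ⟨c, hc, hunique⟩ := hfix
  have hcard_fixed : Nat.card (MulAction.orbitRel.Quotient.orbit (⟦c⟧ : PermOrbits σ)) = 1 := by
    rw [card_orbit_eq_minimalPeriod, Function.minimalPeriod_eq_one_iff_isFixedPt.2 hc]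
  have hcard_moved : ∀ ω ∈ ({⟦c⟧}ᶜ : Finset (PermOrbits σ)), Nat.card ω.orbit = 2 := by
    intro ω hω
    obtain ⟨x, rfl⟩ := Quotient.exists_rep ω
    rw [card_orbit_eq_minimalPeriod]
    refine Function.minimalPeriod_eq_prime (p := 2) (hσ x) fun hx => ?_
    simp [hunique x hx] at hω
  refine ⟨({⟦c⟧}ᶜ : Finset (PermOrbits σ)).card, ?_, fun k => ?_⟩
  · rw [card_eq_sum_card_orbit σ, Fintype.sum_eq_add_sum_compl ⟦c⟧, hcard_fixed,
      Finset.sum_congr rfl hcard_moved, Finset.sum_const, smul_eq_mul]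
    ring
  · rw [card_fixed_eq_coeff, Fintype.prod_eq_mul_prod_compl ⟦c⟧, hcard_fixed,
      Finset.prod_congr rfl fun ω hω => by rw [hcard_moved ω hω], Finset.prod_const, pow_one]

end FixedSubsets

section Sieving

variable {α : Type*} [Finite α] [DecidableEq α] {k : ℕ} {P : MvPolynomial (Fin 2) ℤ}

theorem rootEval_inv_eq_card_fixed (hk : k ≤ Nat.card α)
    (hP : P * gfibFact k * gfibFact (Nat.card α - k) = gfibFact (Nat.card α))
    {σ : Equiv.Perm α} {d : ℕ} (hd : Odd d) (hσ : ∀ x, Function.minimalPeriod σ x = d)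
    {K : Type*} [Field K] {q : K} (hq : IsPrimitiveRoot q d) :
    rootEval q q⁻¹ P = Nat.card {A : Finset α // A.card = k ∧ A.image σ = A} := by
  obtain ⟨m, hm, hcount⟩ := exists_card_fixed_of_minimalPeriod_eq K hσ
  rw [hcount, ← binomialProd_inv hd hq, ← hm, coeff_binomialProd_eq_rootEval hk hP,
    mul_inv_cancel₀ (hq.ne_zero hd.pos.ne'), one_pow, one_mul]

theorem rootEval_one_neg_one_eq_card_fixed (hk : k ≤ Nat.card α)
    (hP : P * gfibFact k * gfibFact (Nat.card α - k) = gfibFact (Nat.card α))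
    {σ : Equiv.Perm α} (hσ : Function.Involutive σ) (hfix : ∃! x, Function.IsFixedPt σ x)
    (R : Type*) [CommRing R] :
    rootEval (1 : R) (-1) P = Nat.card {A : Finset α // A.card = k ∧ A.image σ = A} := by
  obtain ⟨m, hm, hcount⟩ := exists_card_fixed_of_involutive R hσ hfix
  have hcoeff := coeff_binomialProd_eq_rootEval hk hP (1 : R) (-1)
  rw [hm, binomialProd_one_neg_one, coeff_one_add_X_mul_one_sub_X_sq_pow, one_mul] at hcoeff
  rw [hcount, (isUnit_one.neg.pow _).mul_left_cancel hcoeff]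

end Sieving

theorem minimalPeriod_addRight {G : Type*} [AddGroup G] (g x : G) :
    Function.minimalPeriod (Equiv.addRight g) x = addOrderOf g := by
  refine Nat.dvd_right_iff_eq.1 fun j => ?_
  rw [← Function.isPeriodicPt_iff_minimalPeriod_dvd, addOrderOf_dvd_iff_nsmul_eq_zero,
    Function.IsPeriodicPt, Function.IsFixedPt, Equiv.coe_addRight, add_right_iterate_apply,
    add_eq_left]

theorem existsUnique_isFixedPt_neg {G : Type*} [AddGroup G] (hG : Odd (Nat.card G)) :
    ∃! x : G, Function.IsFixedPt (Equiv.neg G) x := by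
  refine ⟨0, neg_zero, fun x hx => ?_⟩
  have hdvd_two : addOrderOf x ∣ 2 := by
    rw [addOrderOf_dvd_iff_nsmul_eq_zero, two_nsmul]
    exact eq_neg_iff_add_eq_zero.1 hx.symm
  exact AddMonoid.addOrderOf_eq_one_iff.1 <|
    Nat.eq_one_of_dvd_coprimes (Nat.coprime_two_left.2 hG) hdvd_two (addOrderOf_dvd_natCard x)

theorem isPrimitiveRoot_primRoot_zpow (n : ℕ) [NeZero n] (l : ℤ) :
    IsPrimitiveRoot (primRoot n ^ l) (addOrderOf (l : ZMod n)) := by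
  have hζ : IsPrimitiveRoot (primRoot n) n := Complex.isPrimitiveRoot_exp n (NeZero.ne n)
  have hdvd (j : ℕ) : (primRoot n ^ l) ^ j = 1 ↔ addOrderOf (l : ZMod n) ∣ j := by
    rw [addOrderOf_dvd_iff_nsmul_eq_zero, ← zpow_natCast, ← zpow_mul, hζ.zpow_eq_one_iff_dvd,
      ← ZMod.intCast_zmod_eq_zero_iff_dvd]
    simp [mul_comm]
  exact ⟨(hdvd _).2 dvd_rfl, fun j => (hdvd j).1⟩

theorem dihedral_sieving_ksubsets_general {G : Type*} [AddGroup G] [Finite G] [DecidableEq G]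
    {K : Type*} [Field K] {k : ℕ} (hk : k ≤ Nat.card G) {P : MvPolynomial (Fin 2) ℤ}
    (hP : P * gfibFact k * gfibFact (Nat.card G - k) = gfibFact (Nat.card G)) :
    (∀ g : G, Odd (addOrderOf g) → ∀ q : K, IsPrimitiveRoot q (addOrderOf g) →
      aeval ![q + q⁻¹, -1] P
        = (Nat.card {A : Finset G // A.card = k ∧ A.image (fun x => x + g) = A} : K)) ∧
    (Odd (Nat.card G) →
      aeval ![(0 : K), 1] P
        = (Nat.card {A : Finset G // A.card = k ∧ A.image (fun x => -x) = A} : K)) := by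
  constructor
  · intro g hg q hq
    have h := rootEval_inv_eq_card_fixed hk hP hg (minimalPeriod_addRight g) hq
    rwa [rootEval, mul_inv_cancel₀ (hq.ne_zero hg.pos.ne')] at h
  · intro hG
    have h := rootEval_one_neg_one_eq_card_fixed hk hP neg_involutive
      (existsUnique_isFixedPt_neg hG) K
    rwa [rootEval, add_neg_cancel, one_mul, neg_neg] at h

/-- Dihedral sieving for `k`-subsets of `ℤ/nℤ`, `n` odd: the Fibonomial polynomial `P`
evaluated at `(ζ^ℓ + ζ^{-ℓ}, -1)` counts the `k`-subsets fixed by the rotation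
`x ↦ x + ℓ`, and `P(0,1)` counts the `k`-subsets fixed by the reflection `x ↦ -x`. -/
theorem dihedral_sieving_ksubsets (n k : ℕ) (hn : Odd n) (hk : k ≤ n)
    (P : MvPolynomial (Fin 2) ℤ)
    (hP : P * gfibFact k * gfibFact (n - k) = gfibFact n) :
    (∀ ℓ : ℤ,
      aeval ![primRoot n ^ ℓ + primRoot n ^ (-ℓ), (-1 : ℂ)] P
        = (Nat.card {A : Finset (ZMod n) //
            A.card = k ∧ A.image (fun x => x + (ℓ : ZMod n)) = A} : ℂ)) ∧
    aeval ![(0 : ℂ), 1] P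
      = (Nat.card {A : Finset (ZMod n) //
          A.card = k ∧ A.image (fun x => -x) = A} : ℂ) := by
  have : NeZero n := ⟨hn.pos.ne'⟩
  rw [← Nat.card_zmod n] at hk hP hn
  obtain ⟨hrot, hrefl⟩ := dihedral_sieving_ksubsets_general (K := ℂ) hk hP
  refine ⟨fun ℓ => ?_, hrefl hn⟩
  rw [zpow_neg]
  exact hrot ℓ (hn.of_dvd_nat (addOrderOf_dvd_natCard _)) _ (isPrimitiveRoot_primRoot_zpow n ℓ)
end

section
/- Let C̃_n(q) ∈ ℤ[q] be the Carlitz–Riordan q-Catalan polynomials. Then for every even natural number n > 0, C̃_n(−1) = 0. -/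
/-- The Carlitz–Riordan q-Catalan polynomials, defined by `C̃_0(q) = 1` and
`C̃_{n+1}(q) = ∑_{k=0}^{n} q^k C̃_k(q) C̃_{n-k}(q)`. -/
noncomputable def crCatalan : ℕ → Polynomial ℤ
  | 0 => 1
  | (n + 1) =>
    ∑ k ∈ (Finset.range (n + 1)).attach,
      Polynomial.X ^ (k : ℕ) * crCatalan k * crCatalan (n - (k : ℕ))
decreasing_by
  · exact Nat.lt_succ_of_le (Nat.le_of_lt_succ (Finset.mem_range.mp k.2))
  · exact Nat.lt_succ_of_le (Nat.sub_le n k)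

open Finset in
theorem crCatalan_succ (n : ℕ) :
    crCatalan (n + 1) =
      ∑ p ∈ antidiagonal n, Polynomial.X ^ p.1 * crCatalan p.1 * crCatalan p.2 := by
  rw [crCatalan, sum_attach (range (n + 1))
      fun k ↦ Polynomial.X ^ k * crCatalan k * crCatalan (n - k),
    Nat.sum_antidiagonal_eq_sum_range_succ
      fun i j ↦ Polynomial.X ^ i * crCatalan i * crCatalan j]

theorem neg_one_pow_add_neg_one_pow_eq_zero_of_odd_add {R : Type*} [Ring R] {i j : ℕ}
    (h : Odd (i + j)) : (-1 : R) ^ i + (-1) ^ j = 0 := by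
  rcases Nat.even_or_odd i with hi | hi
  · rw [hi.neg_one_pow, ((Nat.odd_add'.mp h).mpr hi).neg_one_pow, add_neg_cancel]
  · rw [hi.neg_one_pow, ((Nat.odd_add.mp h).mp hi).neg_one_pow, neg_add_cancel]

open Finset in
theorem sum_antidiagonal_neg_one_pow_mul_eq_zero_of_odd {R : Type*} [Ring R] {m : ℕ} (hm : Odd m)
    {f : ℕ × ℕ → R} (hf : ∀ p, f p.swap = f p) :
    ∑ p ∈ antidiagonal m, (-1) ^ p.1 * f p = 0 := by
  -- `Prod.swap` pairs off the terms without fixed points, so no division by `2` is needed.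
  refine sum_involution (fun p _ ↦ p.swap) ?cancel ?fixedPointFree
    (fun _ hp ↦ HasAntidiagonal.swap_mem_antidiagonal.mpr hp) fun p _ ↦ p.swap_swap
  case cancel =>
    intro p hp
    have hodd : Odd (p.1 + p.2) := mem_antidiagonal.mp hp ▸ hm
    rw [hf, ← add_mul, Prod.fst_swap, neg_one_pow_add_neg_one_pow_eq_zero_of_odd_add hodd, zero_mul]
  case fixedPointFree =>
    rintro ⟨i, j⟩ hij - hswap
    obtain rfl : j = i := congrArg Prod.fst hswap
    exact Nat.not_odd_iff_even.mpr ⟨j, (mem_antidiagonal.mp hij).symm⟩ hm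

/-- For every even `n > 0`, `C̃_n(-1) = 0`. -/
theorem crCatalan_eval_neg_one_of_even (n : ℕ) (hpos : 0 < n) (heven : Even n) :
    Polynomial.eval (-1 : ℤ) (crCatalan n) = 0 := by
  obtain ⟨m, rfl⟩ := Nat.exists_eq_add_one.mpr hpos
  have hm : Odd m := by simpa [Nat.even_add_one] using heven
  calc (crCatalan (m + 1)).eval (-1)
      = ∑ p ∈ Finset.HasAntidiagonal.antidiagonal m,
          (-1) ^ p.1 * ((crCatalan p.1).eval (-1) * (crCatalan p.2).eval (-1)) := by
        simp [crCatalan_succ, Polynomial.eval_finsetSum, mul_assoc]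
    _ = 0 := sum_antidiagonal_neg_one_pow_mul_eq_zero_of_odd hm fun _ ↦ mul_comm _ _
end

section
/- Let n be odd and 0 ≤ k ≤ n, and let P ∈ ℤ[s,t] be the unique polynomial with P·{k}!_{s,t}·{n−k}!_{s,t} = {n}!_{s,t}. Then P(0, 1) = binom((n−1)/2, ⌊k/2⌋). -/
open MvPolynomial

/-!
At `(s, t) = (0, 1)` the polynomials `{2j+1}` take the value `1`, while `{2j}` vanishes there, but
`{2j} / s` takes the value `j`. Hence `{m}! / s ^ ⌊m/2⌋` takes the value `⌊m/2⌋!`. Cancelling powers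
of `s` in `P · {i}! · {j}! = {i+j}!` leaves a factor of `s` on the right if `i` and `j` are both
odd, so that `P(0, 1) = 0`, and otherwise leaves an ordinary binomial coefficient.
-/

lemma eval_zero_one_gfib_two_mul_add_one (j : ℕ) :
    eval ![(0 : ℤ), 1] (gfib (2 * j + 1)) = 1 := by
  induction j with
  | zero => simp [gfib]
  | succ j ih => simp [Nat.mul_succ, gfib, ih]

lemma exists_gfib_two_mul_eq_X_mul (j : ℕ) :
    ∃ q : MvPolynomial (Fin 2) ℤ, gfib (2 * j) = X 0 * q ∧ eval ![(0 : ℤ), 1] q = j := by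
  induction j with
  | zero => exact ⟨0, by simp [gfib], by simp⟩
  | succ j ih =>
    obtain ⟨q, hq, hq_eval⟩ := ih
    refine ⟨gfib (2 * j + 1) + X 1 * q, ?_, ?_⟩
    · rw [Nat.mul_succ, gfib, hq]
      ring
    · rw [map_add, map_mul, eval_zero_one_gfib_two_mul_add_one, hq_eval]
      simp [add_comm]

lemma exists_gfibFact_eq_X_pow_mul (m : ℕ) :
    ∃ q : MvPolynomial (Fin 2) ℤ,
      gfibFact m = X 0 ^ (m / 2) * q ∧ eval ![(0 : ℤ), 1] q = (m / 2).factorial := by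
  induction m with
  | zero => exact ⟨1, by simp [gfibFact], by simp⟩
  | succ m ih =>
    obtain ⟨q, hq, hq_eval⟩ := ih
    obtain ⟨j, rfl | rfl⟩ := Nat.even_or_odd' m
    · have half : (2 * j + 1) / 2 = 2 * j / 2 := by lia
      refine ⟨gfib (2 * j + 1) * q, ?_, ?_⟩
      · rw [gfibFact, hq, half]
        ring
      · rw [map_mul, eval_zero_one_gfib_two_mul_add_one, hq_eval, half, one_mul]
    · obtain ⟨r, hr, hr_eval⟩ := exists_gfib_two_mul_eq_X_mul (j + 1)
      have half : (2 * j + 1) / 2 = j := by lia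
      have half_succ : (2 * j + 1 + 1) / 2 = j + 1 := by lia
      rw [half] at hq hq_eval
      refine ⟨r * q, ?_, ?_⟩
      · rw [gfibFact, hq, half_succ, show 2 * j + 1 + 1 = 2 * (j + 1) by ring, hr]
        ring
      · rw [map_mul, hr_eval, hq_eval, half_succ, Nat.factorial_succ, Nat.cast_mul]

lemma fibonomial_eval_zero_one_mul_factorial_mul_factorial (i j : ℕ)
    (P : MvPolynomial (Fin 2) ℤ)
    (hP : P * gfibFact i * gfibFact j = gfibFact (i + j)) :
    eval ![(0 : ℤ), 1] P * (i / 2).factorial * (j / 2).factorial =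
      0 ^ ((i + j) / 2 - (i / 2 + j / 2)) * ((i + j) / 2).factorial := by
  obtain ⟨a, ha, ha_eval⟩ := exists_gfibFact_eq_X_pow_mul i
  obtain ⟨b, hb, hb_eval⟩ := exists_gfibFact_eq_X_pow_mul j
  obtain ⟨c, hc, hc_eval⟩ := exists_gfibFact_eq_X_pow_mul (i + j)
  have cancelled : P * a * b = X 0 ^ ((i + j) / 2 - (i / 2 + j / 2)) * c := by
    refine mul_left_cancel₀ (pow_ne_zero (i / 2 + j / 2) (X_ne_zero (R := ℤ) (0 : Fin 2))) ?_
    calc X 0 ^ (i / 2 + j / 2) * (P * a * b)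
        = P * gfibFact i * gfibFact j := by rw [ha, hb]; ring
      _ = X 0 ^ ((i + j) / 2) * c := by rw [hP, hc]
      _ = X 0 ^ (i / 2 + j / 2) * (X 0 ^ ((i + j) / 2 - (i / 2 + j / 2)) * c) := by
          rw [← mul_assoc, pow_mul_pow_sub _ Nat.div_add_div_le_add_div]
  simpa [ha_eval, hb_eval, hc_eval] using congrArg (eval ![(0 : ℤ), 1]) cancelled

theorem fibonomial_eval_zero_one_general (i j : ℕ) (P : MvPolynomial (Fin 2) ℤ)
    (hP : P * gfibFact i * gfibFact j = gfibFact (i + j)) :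
    eval ![(0 : ℤ), 1] P =
      if Odd i ∧ Odd j then 0 else (((i + j) / 2).choose (i / 2) : ℤ) := by
  have key := fibonomial_eval_zero_one_mul_factorial_mul_factorial i j P hP
  have factorial_ne_zero (m : ℕ) : (m.factorial : ℤ) ≠ 0 := mod_cast m.factorial_ne_zero
  refine mul_right_cancel₀ (factorial_ne_zero (i / 2))
    (mul_right_cancel₀ (factorial_ne_zero (j / 2)) (key.trans ?_))
  split_ifs with hodd
  · have carry : (i + j) / 2 - (i / 2 + j / 2) = 1 := by grind
    simp [carry]
  · have no_carry : (i + j) / 2 = i / 2 + j / 2 := by grind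
    rw [no_carry, Nat.sub_self, pow_zero, one_mul, Nat.choose_symm_add]
    exact_mod_cast (Nat.add_choose_mul_factorial_mul_factorial (i / 2) (j / 2)).symm

/-- For `n` odd and `0 ≤ k ≤ n`, the Fibonomial polynomial `P` satisfies
`P(0, 1) = binom((n-1)/2, ⌊k/2⌋)`. -/
theorem fibonomial_eval_zero_one (n k : ℕ) (hn : Odd n) (hk : k ≤ n)
    (P : MvPolynomial (Fin 2) ℤ)
    (hP : P * gfibFact k * gfibFact (n - k) = gfibFact n) :
    eval ![(0 : ℤ), 1] P = (((n - 1) / 2).choose (k / 2) : ℤ) := by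
  obtain ⟨j, rfl⟩ := Nat.exists_eq_add_of_le hk
  rw [fibonomial_eval_zero_one_general k j P (by simpa using hP), if_neg (by grind),
    show (k + j - 1) / 2 = (k + j) / 2 by grind]
end

section
/- Let n be odd, 0 ≤ k ≤ n, and let σ : ℤ/nℤ → ℤ/nℤ be either a rotation x ↦ x+ℓ (in which case set ε = 1) or a reflection x ↦ j−x (in which case set ε = −1). Then the trace of the linear map induced by σ on the k-th exterior power Λ^k(ℂ^{ℤ/nℤ}) equals ε^{k(k−1)/2} multiplied by the number of k-element subsets A of ℤ/nℤ with σ(A) = A. -/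
open ExteriorAlgebra

/-- The algebra map `ExteriorAlgebra.map f` preserves the `k`-th exterior power. -/
theorem exteriorPower_map_le {R M : Type*} [CommRing R] [AddCommGroup M] [Module R M]
    (k : ℕ) (f : M →ₗ[R] M) :
    Submodule.map (ExteriorAlgebra.map f).toLinearMap (⋀[R]^k M) ≤ ⋀[R]^k M := by
  have h2 : Submodule.map (ExteriorAlgebra.map f).toLinearMap
      (LinearMap.range (ι R (M := M))) ≤ LinearMap.range (ι R (M := M)) := by
    rw [ι_range_map_map]
    exact LinearMap.map_le_range
  show Submodule.map (ExteriorAlgebra.map f).toLinearMap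
      (LinearMap.range (ι R (M := M)) ^ k) ≤ LinearMap.range (ι R (M := M)) ^ k
  rw [Submodule.map_pow]
  induction k with
  | zero => simp
  | succ m ih => rw [pow_succ, pow_succ]; exact mul_le_mul' ih h2

/-- The linear map induced on the `k`-th exterior power `⋀[R]^k M` by a linear map
`f : M →ₗ[R] M`, obtained by restricting the algebra map `ExteriorAlgebra.map f`. -/
noncomputable def exteriorPowerMap {R M : Type*} [CommRing R] [AddCommGroup M] [Module R M]
    (k : ℕ) (f : M →ₗ[R] M) : ⋀[R]^k M →ₗ[R] ⋀[R]^k M :=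
  (ExteriorAlgebra.map f).toLinearMap.restrict (p := ⋀[R]^k M) (q := ⋀[R]^k M)
    (fun x hx => exteriorPower_map_le k f ⟨x, hx, rfl⟩)

/-!
The trace of `Λᵏ f` is the sum of the principal `k × k` minors of a matrix of `f`. For a permutation
matrix, the minor on `A` vanishes unless `σ` maps `A` to itself, in which case it is the sign of
the restriction of `σ` to `A`. All these signs agree. The restriction of a rotation has odd order,
hence sign `1`. The restriction of a reflection is an involution with at most one fixed point,
because doubling is injective in a group of odd order, so it is a product of `⌊k / 2⌋` disjoint
transpositions, and `⌊k / 2⌋` has the parity of `k (k - 1) / 2`.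
-/

open Matrix

section PrincipalMinors

variable {R M I : Type*} [CommRing R] [AddCommGroup M] [Module R M]

theorem exteriorPowerMap_eq_map (k : ℕ) (f : M →ₗ[R] M) :
    exteriorPowerMap k f = exteriorPower.map k f := by
  ext v
  simp only [LinearMap.compAlternatingMap_apply, exteriorPower.map_apply_ιMulti,
    exteriorPower.ιMulti_apply_coe]
  exact ExteriorAlgebra.map_apply_ιMulti f v

variable [DecidableEq I] [Fintype I]

theorem basis_exteriorPower_repr_map_self [LinearOrder I] (b : Module.Basis I R M) {k : ℕ}
    (f : M →ₗ[R] M) (s : Set.powersetCard I k) :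
    (b.exteriorPower k).repr (exteriorPower.map k f (b.exteriorPower k s)) s =
      ((LinearMap.toMatrix b b f).submatrix (Subtype.val : s.val → I) Subtype.val).det := by
  rw [← det_submatrix_equiv_self (s.val.orderIsoOfFin (Set.powersetCard.card_eq s)).toEquiv,
    ← det_transpose, exteriorPower.basis_apply, exteriorPower.ιMulti_family,
    exteriorPower.map_apply_ιMulti, exteriorPower.basis_repr_apply,
    exteriorPower.ιMultiDual_apply_ιMulti]
  congr 1
  ext i j
  simp [LinearMap.toMatrix_apply, Set.powersetCard.ofFinEmbEquiv_symm_apply]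

theorem trace_exteriorPowerMap_eq_sum_minors (b : Module.Basis I R M) (k : ℕ) (f : M →ₗ[R] M) :
    LinearMap.trace R _ (exteriorPowerMap k f) = ∑ s ∈ Finset.univ.powersetCard k,
      ((LinearMap.toMatrix b b f).submatrix (Subtype.val : s → I) Subtype.val).det := by
  classical
  let _ : LinearOrder I := LinearOrder.lift' (Fintype.equivFin I) (Fintype.equivFin I).injective
  rw [exteriorPowerMap_eq_map, LinearMap.trace_eq_matrix_trace R (b.exteriorPower k), trace,
    Finset.sum_subtype (p := (· ∈ Set.powersetCard I k)) _ (by simp [Set.powersetCard.mem_iff])]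
  refine Finset.sum_congr rfl fun s _ => ?_
  rw [diag_apply, LinearMap.toMatrix_apply, basis_exteriorPower_repr_map_self]

end PrincipalMinors

section PermutationMatrices

variable {R I : Type*} [CommRing R] [DecidableEq I]

theorem toMatrix_funLeft_symm (R : Type*) [CommSemiring R] [Fintype I] (σ : Equiv.Perm I) :
    LinearMap.toMatrix (Pi.basisFun R I) (Pi.basisFun R I) (LinearMap.funLeft R R σ.symm) =
      (σ.permMatrix R)ᵀ := by
  ext i j
  simp [LinearMap.funLeft_apply, PEquiv.toMatrix_apply, Pi.single_apply, Equiv.symm_apply_eq,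
    eq_comm (a := i)]

variable {σ : Equiv.Perm I} {A : Finset I}

theorem perm_apply_mem_iff_of_image_eq (h : A.image σ = A) (x : I) : σ x ∈ A ↔ x ∈ A := by
  conv_lhs => rw [← h, σ.injective.mem_finset_image]

theorem exists_perm_apply_notMem_of_image_ne (h : A.image σ ≠ A) : ∃ x ∈ A, σ x ∉ A := by
  contrapose! h
  exact Finset.eq_of_subset_of_card_le (Finset.image_subset_iff.mpr h)
    (Finset.card_image_of_injective A σ.injective).ge

theorem det_submatrix_permMatrix_of_image_eq (h : A.image σ = A) :
    ((σ.permMatrix R).submatrix (Subtype.val : A → I) Subtype.val).det =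
      Equiv.Perm.sign (σ.subtypePerm (perm_apply_mem_iff_of_image_eq h)) := by
  rw [← det_permutation]
  congr 1
  ext i j
  simp [PEquiv.toMatrix_apply, Subtype.ext_iff]

theorem det_submatrix_permMatrix_of_image_ne (h : A.image σ ≠ A) :
    ((σ.permMatrix R).submatrix (Subtype.val : A → I) Subtype.val).det = 0 := by
  obtain ⟨x, hx, hσx⟩ := exists_perm_apply_notMem_of_image_ne h
  refine det_eq_zero_of_row_eq_zero ⟨x, hx⟩ fun y => ?_
  have hy : σ x ≠ y := fun hxy => hσx (hxy ▸ y.2)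
  simp [PEquiv.toMatrix_apply, hy]

theorem trace_exteriorPowerMap_funLeft_symm [Fintype I] (k : ℕ) (σ : Equiv.Perm I) :
    LinearMap.trace R _ (exteriorPowerMap k (LinearMap.funLeft R R σ.symm)) =
      ∑ A : {A : Finset I // A.card = k ∧ A.image σ = A},
        ((Equiv.Perm.sign (σ.subtypePerm (perm_apply_mem_iff_of_image_eq A.2.2)) : ℤ) : R) := by
  simp_rw [trace_exteriorPowerMap_eq_sum_minors (Pi.basisFun R I), toMatrix_funLeft_symm,
    ← transpose_submatrix, det_transpose]
  rw [← Finset.sum_filter_of_ne (p := fun A => A.image σ = A)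
      fun A _ => not_imp_comm.mp det_submatrix_permMatrix_of_image_ne,
    Finset.sum_subtype (p := fun A => A.card = k ∧ A.image σ = A) _ (by simp)]
  exact Finset.sum_congr rfl fun A _ => det_submatrix_permMatrix_of_image_eq A.2.2

end PermutationMatrices

section Signs

variable {α : Type*} {σ : Equiv.Perm α}

theorem subtypePerm_pow_eq_one {p : α → Prop} (hp : ∀ x, p (σ x) ↔ p x) {n : ℕ}
    (hσ : σ ^ n = 1) : σ.subtypePerm hp ^ n = 1 := by
  rw [Equiv.Perm.subtypePerm_pow]
  ext x
  simp [hσ]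

theorem neg_one_pow_mul_sub_one_div_two {R : Type*} [Monoid R] [HasDistribNeg R] (k : ℕ) :
    (-1 : R) ^ (k * (k - 1) / 2) = (-1) ^ (k / 2) := by
  rcases k.even_or_odd' with ⟨m, rfl | rfl⟩
  · rcases m with _ | m
    · simp
    · have hexp : 2 * (m + 1) * (2 * (m + 1) - 1) / 2 = (2 * m + 1) * (m + 1) := by
        rw [mul_assoc, Nat.mul_div_cancel_left _ two_pos, mul_comm, Nat.mul_succ 2 m,
          Nat.add_succ_sub_one]
      rw [hexp, pow_mul, (odd_two_mul_add_one m).neg_one_pow, Nat.mul_div_cancel_left _ two_pos]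
  · have hexp : (2 * m + 1) * (2 * m + 1 - 1) / 2 = (2 * m + 1) * m := by
      rw [Nat.add_sub_cancel, mul_left_comm, Nat.mul_div_cancel_left _ two_pos]
    have hhalf : (2 * m + 1) / 2 = m := by lia
    rw [hexp, pow_mul, (odd_two_mul_add_one m).neg_one_pow, hhalf]

variable [Fintype α] [DecidableEq α]

theorem sign_eq_one_of_odd_of_pow_eq_one {n : ℕ} (hn : Odd n) (hσ : σ ^ n = 1) :
    Equiv.Perm.sign σ = 1 := by
  rw [← pow_one (Equiv.Perm.sign σ), ← Nat.odd_iff.mp hn, ← Int.units_pow_eq_pow_mod_two,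
    ← map_pow, hσ, map_one]

theorem sign_eq_of_sq_eq_one_of_subsingleton_fixedPoints (hσ : σ ^ 2 = 1)
    (hfix : (Function.fixedPoints σ).Subsingleton) :
    Equiv.Perm.sign σ = (-1) ^ (Fintype.card α * (Fintype.card α - 1) / 2) := by
  have hle : Fintype.card (Function.fixedPoints σ) ≤ 1 :=
    Fintype.card_le_one_iff_subsingleton.mpr hfix.coe_sort
  have hmod : Fintype.card α ≡ Fintype.card (Function.fixedPoints σ) [MOD 2] :=
    Equiv.Perm.card_fixedPoints_modEq (n := 1) (f := (σ : α → α)) (congrArg DFunLike.coe hσ)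
  rw [Equiv.Perm.sign_of_pow_two_eq_one hσ, neg_one_pow_mul_sub_one_div_two]
  congr 1
  rw [Nat.ModEq] at hmod
  lia

end Signs

section Dihedral

theorem addRight_pow_card {G : Type*} [AddGroup G] (l : G) :
    Equiv.addRight l ^ Nat.card G = 1 := by
  rw [Equiv.nsmul_addRight, card_nsmul_eq_zero', Equiv.addRight_zero]

variable {G : Type*} [AddCommGroup G]

theorem subLeft_sq (j : G) : Equiv.subLeft j ^ 2 = 1 := by
  ext x
  simp [sq]

theorem subsingleton_fixedPoints_subLeft (hG : Odd (Nat.card G)) (j : G) :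
    (Function.fixedPoints (Equiv.subLeft j)).Subsingleton := by
  intro x hx y hy
  refine hG.coprime_two_right.nsmul_right_bijective.injective ?_
  have two_nsmul_eq {z : G} (hz : j - z = z) : 2 • z = j := by
    rw [two_nsmul, ← sub_eq_iff_eq_add.mp hz]
  exact (two_nsmul_eq hx).trans (two_nsmul_eq hy).symm

theorem sign_subtypePerm_dihedral {R : Type*} [CommRing R] [DecidableEq G]
    (hG : Odd (Nat.card G)) {σ : Equiv.Perm G} {ε : R}
    (hσ : ((∃ l : G, σ = Equiv.addRight l) ∧ ε = 1) ∨
          ((∃ j : G, σ = Equiv.subLeft j) ∧ ε = -1))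
    {A : Finset G} (hA : ∀ x, σ x ∈ A ↔ x ∈ A) :
    ((Equiv.Perm.sign (σ.subtypePerm hA) : ℤ) : R) = ε ^ (A.card * (A.card - 1) / 2) := by
  rcases hσ with ⟨⟨l, rfl⟩, rfl⟩ | ⟨⟨j, rfl⟩, rfl⟩
  · have hpow : (Equiv.Perm.subtypePerm (Equiv.addRight l) hA) ^ Nat.card G = 1 :=
      subtypePerm_pow_eq_one hA (addRight_pow_card l)
    simp [sign_eq_one_of_odd_of_pow_eq_one hG hpow]
  · have hsq : (Equiv.Perm.subtypePerm (Equiv.subLeft j) hA) ^ 2 = 1 :=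
      subtypePerm_pow_eq_one hA (subLeft_sq j)
    have hfix : (Function.fixedPoints (Equiv.Perm.subtypePerm (Equiv.subLeft j) hA)).Subsingleton :=
      fun x hx y hy => Subtype.ext <| subsingleton_fixedPoints_subLeft hG j
        (congrArg Subtype.val hx) (congrArg Subtype.val hy)
    simp [sign_eq_of_sq_eq_one_of_subsingleton_fixedPoints hsq hfix]

theorem trace_exteriorPower_dihedral_general {R : Type*} [CommRing R] [DecidableEq G]
    (hG : Odd (Nat.card G)) (k : ℕ) (σ : Equiv.Perm G) (ε : R)
    (hσ : ((∃ l : G, σ = Equiv.addRight l) ∧ ε = 1) ∨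
          ((∃ j : G, σ = Equiv.subLeft j) ∧ ε = -1)) :
    LinearMap.trace R _
        (exteriorPowerMap k (LinearMap.funLeft R R σ.symm : (G → R) →ₗ[R] (G → R)))
      = ε ^ (k * (k - 1) / 2) *
          (Nat.card {A : Finset G // A.card = k ∧ A.image σ = A} : R) := by
  have := Nat.finite_of_card_ne_zero hG.pos.ne'
  have := Fintype.ofFinite G
  have hsign (A : {A : Finset G // A.card = k ∧ A.image σ = A}) :
      ((Equiv.Perm.sign (σ.subtypePerm (perm_apply_mem_iff_of_image_eq A.2.2)) : ℤ) : R) =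
        ε ^ (k * (k - 1) / 2) := by
    rw [sign_subtypePerm_dihedral hG hσ, A.2.1]
  rw [trace_exteriorPowerMap_funLeft_symm, Finset.sum_congr rfl fun A _ => hsign A,
    Finset.sum_const, Finset.card_univ, nsmul_eq_mul, mul_comm, Nat.card_eq_fintype_card]

end Dihedral

/-- Dihedral sieving for exterior powers: for `n` odd, `0 ≤ k ≤ n`, and `σ` either a
rotation `x ↦ x + ℓ` (with `ε = 1`) or a reflection `x ↦ j - x` (with `ε = -1`) of
`ℤ/nℤ`, the trace of the induced map on `⋀^k (ℂ^{ℤ/nℤ})` (where the permutation map on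
`ℂ^{ℤ/nℤ}` sends `e_x` to `e_{σ x}`) equals `ε^{k(k-1)/2}` times the number of
`k`-subsets of `ℤ/nℤ` fixed by `σ`. -/
theorem trace_exteriorPower_dihedral (n k : ℕ) [NeZero n] (hn : Odd n) (hk : k ≤ n)
    (σ : Equiv.Perm (ZMod n)) (ε : ℂ)
    (hσ : ((∃ ℓ : ZMod n, σ = Equiv.addRight ℓ) ∧ ε = 1) ∨
          ((∃ j : ZMod n, σ = Equiv.subLeft j) ∧ ε = -1)) :
    LinearMap.trace ℂ _
        (exteriorPowerMap k (LinearMap.funLeft ℂ ℂ σ.symm : (ZMod n → ℂ) →ₗ[ℂ] (ZMod n → ℂ)))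
      = ε ^ (k * (k - 1) / 2) *
          (Nat.card {A : Finset (ZMod n) // A.card = k ∧ A.image σ = A} : ℂ) := by
  exact trace_exteriorPower_dihedral_general (by rwa [Nat.card_zmod]) k σ ε hσ
end
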